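/- Let (X,d) be a Polish space and f a continuous semi-flow on X. If (X,f) is chaotic, then there exists an uncountable dense subset B of X such that limsup_{t→+∞} d(f^t(x), f^t(y)) > 0 for all x, y ∈ B with x ≠ y. -/

import Mathlib

open Filter Topology Metric Set TopologicalSpace

/-- `f` is a continuous semi-flow on `X`: jointly continuous on `[0,∞) × X`,
`f 0 x = x`, and `f s (f t x) = f (s+t) x` for `s, t ≥ 0`. -/
def IsSemiflow {X : Type*} [MetricSpace X] (f : ℝ → X → X) : Prop :=
  ContinuousOn (fun p : ℝ × X => f p.1 p.2) (Set.Ici 0 ×ˢ Set.univ) ∧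
  (∀ x, f 0 x = x) ∧
  (∀ s t : ℝ, 0 ≤ s → 0 ≤ t → ∀ x, f s (f t x) = f (s + t) x)

/-- the forward orbit `O₊(f,x) = {f t x : t ≥ 0}`. -/
def posOrbit {X : Type*} [MetricSpace X] (f : ℝ → X → X) (x : X) : Set X :=
  (fun t => f t x) '' Set.Ici (0 : ℝ)

/-- `x` is Birkhoff recurrent for `f`. -/
def BirkhoffRecurrent {X : Type*} [MetricSpace X] (f : ℝ → X → X) (x : X) : Prop :=
  ∀ ε > (0:ℝ), ∃ T > (0:ℝ), ∀ τ ≥ (0:ℝ), ∀ υ ≥ (0:ℝ),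
    ∃ t : ℝ, τ < t ∧ t < τ + T ∧ dist (f υ x) (f t x) < ε

/-- `f` is topologically quasi-transitive: some forward orbit is dense. -/
def QuasiTransitive {X : Type*} [MetricSpace X] (f : ℝ → X → X) : Prop :=
  ∃ x : X, Dense (posOrbit f x)

/-- `(X,f)` is chaotic: quasi-transitive, Birkhoff recurrent points dense, and
two motions far away from each other. -/
def Chaotic {X : Type*} [MetricSpace X] (f : ℝ → X → X) : Prop :=
  QuasiTransitive f ∧ Dense {x : X | BirkhoffRecurrent f x} ∧
  ∃ x y : X, closure (posOrbit f x) ∩ closure (posOrbit f y) = ∅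

lemma semiflow_cont {X : Type*} [MetricSpace X] {f : ℝ → X → X} (hf : IsSemiflow f)
    {t : ℝ} (ht : 0 ≤ t) : Continuous (f t) := by
  have h := hf.1.comp_continuous (f := fun x : X => (t, x)) (by fun_prop)
    (fun x => ⟨ht, mem_univ _⟩)
  exact h

lemma semiflow_cont_orbit {X : Type*} [MetricSpace X] {f : ℝ → X → X} (hf : IsSemiflow f)
    (x : X) : ContinuousOn (fun t => f t x) (Ici 0) := by
  have h := hf.1.comp (f := fun t : ℝ => (t, x)) (s := Ici 0) (by fun_prop)
    (fun t ht => ⟨ht, mem_univ _⟩)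
  exact h

/-- Transitive points visit every nonempty open set at arbitrarily large times. -/
lemma visits {X : Type*} [MetricSpace X] {f : ℝ → X → X} (hf : IsSemiflow f)
    (hd : Dense {x : X | BirkhoffRecurrent f x}) {w : X} (hw : Dense (posOrbit f w))
    (V : Set X) (hV : IsOpen V) (hne : V.Nonempty) (N : ℝ) : ∃ t, 0 ≤ t ∧ N ≤ t ∧ f t w ∈ V := by
  obtain ⟨z, hzV, hz⟩ := hd.inter_open_nonempty V hV hne
  obtain ⟨ε, hε, hball⟩ := Metric.isOpen_iff.1 hV z hzV
  obtain ⟨T, hT, h⟩ := hz ε hε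
  obtain ⟨t, ht1, -, ht⟩ := h (max N 0) (le_max_right _ _) 0 le_rfl
  have ht0 : 0 ≤ t := (le_max_right _ _).trans ht1.le
  have htN : N ≤ t := (le_max_left _ _).trans ht1.le
  rw [hf.2.1] at ht
  have hpre : IsOpen (f t ⁻¹' V) := hV.preimage (semiflow_cont hf ht0)
  obtain ⟨v, hv, s, hs, rfl⟩ := hw.inter_open_nonempty _ hpre
    ⟨z, hball (by rw [mem_ball, dist_comm]; exact ht)⟩
  have hs0 : (0 : ℝ) ≤ s := hs
  refine ⟨t + s, by linarith, by linarith, ?_⟩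
  rw [← hf.2.2 t s ht0 hs]
  exact hv

lemma sensitive {X : Type*} [MetricSpace X] [CompleteSpace X]
    {f : ℝ → X → X} (hf : IsSemiflow f) (hc : Chaotic f) :
    ∃ ε > (0 : ℝ), ∀ U : Set X, IsOpen U → U.Nonempty → ∀ N : ℝ,
      ∃ y ∈ U, ∃ z ∈ U, ∃ t, N ≤ t ∧ ε < dist (f t y) (f t z) := by
  by_contra hcon
  push Not at hcon
  obtain ⟨⟨w, hw⟩, hd, p, q, hpq⟩ := hc
  have key : ∀ ε > (0 : ℝ), ∃ z w' : X, ∃ T N : ℝ, 0 ≤ N ∧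
      (∀ t, N ≤ t → dist (f t w') (f t z) ≤ ε) ∧
      (∀ τ ≥ (0:ℝ), ∀ υ ≥ (0:ℝ), ∃ t : ℝ, τ < t ∧ t < τ + T ∧ dist (f υ z) (f t z) < ε) ∧
      (∀ V : Set X, IsOpen V → V.Nonempty → ∃ t, N ≤ t ∧ f t w' ∈ V) := by
    intro ε hε
    obtain ⟨U, hU, hne, N, h⟩ := hcon ε hε
    obtain ⟨z, hzU, hz⟩ := hd.inter_open_nonempty U hU hne
    obtain ⟨T, hT, hrec⟩ := hz ε hε
    obtain ⟨w', hw'U, s, hs, rfl⟩ := hw.inter_open_nonempty U hU hne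
    have hs0 : (0 : ℝ) ≤ s := hs
    refine ⟨z, f s w, T, max N 0, le_max_right _ _, ?_, hrec, ?_⟩
    · intro t ht
      exact h _ hw'U z hzU t ((le_max_left _ _).trans ht)
    · intro V hV hVne
      obtain ⟨t, ht0, ht, htV⟩ := visits hf hd hw V hV hVne (max N 0 + s)
      have h0 : 0 ≤ max N 0 := le_max_right _ _
      refine ⟨t - s, by linarith, ?_⟩
      rw [hf.2.2 (t - s) s (by linarith) hs]
      simpa using htV
  -- compactness
  have htb : TotallyBounded (univ : Set X) := by
    rw [Metric.totallyBounded_iff]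
    intro δ hδ
    obtain ⟨z, w', T, N, hN, hwz, hrec, hvis⟩ := key (δ / 4) (by linarith)
    have hK : IsCompact ((fun t => f t z) '' Icc 0 T) :=
      isCompact_Icc.image_of_continuousOn
        ((semiflow_cont_orbit hf z).mono (fun t ht => ht.1))
    obtain ⟨S, hS, hcov⟩ := Metric.totallyBounded_iff.1 hK.totallyBounded (δ / 4) (by linarith)
    refine ⟨S, hS, fun x _ => ?_⟩
    obtain ⟨t, htN, htx⟩ := hvis (ball x (δ / 4)) isOpen_ball ⟨x, mem_ball_self (by linarith)⟩
    obtain ⟨r, hr0, hrT, hr⟩ := hrec 0 le_rfl t (hN.trans htN)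
    have hmem := hcov (mem_image_of_mem (fun t => f t z) (show r ∈ Icc 0 T from
      ⟨hr0.le, by linarith⟩))
    simp only [mem_iUnion, mem_ball] at hmem ⊢
    obtain ⟨y, hy, hyd⟩ := hmem
    refine ⟨y, hy, ?_⟩
    have h1 := hwz t htN
    have h2 := dist_triangle x (f t w') y
    have h3 := dist_triangle (f t w') (f t z) y
    have h4 := dist_triangle (f t z) (f r z) y
    rw [mem_ball, dist_comm] at htx
    linarith
  have hcomp : IsCompact (univ : Set X) := isCompact_iff_totallyBounded_isComplete.2
    ⟨htb, isClosed_univ.isComplete⟩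
  have : CompactSpace X := ⟨hcomp⟩
  obtain ⟨δ, hδ, hdisj⟩ := (Set.disjoint_iff_inter_eq_empty.2 hpq).exists_thickenings
    isClosed_closure.isCompact isClosed_closure
  obtain ⟨z, w', T, N, hN, hwz, hrec, hvis⟩ := key (δ / 3) (by linarith)
  have hall : ∀ v : X, ∃ s ∈ Icc 0 T, dist (f s v) z ≤ 2 * (δ / 3) := by
    let g : Icc 0 T × X → X := fun a => f a.1 a.2
    have hg : Continuous g := hf.1.comp_continuous
      (f := fun a : Icc 0 T × X => ((a.1 : ℝ), a.2)) (by fun_prop)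
      (fun a => ⟨a.1.2.1, mem_univ _⟩)
    have hcl : IsClosed {a : Icc 0 T × X | dist (g a) z ≤ 2 * (δ / 3)} :=
      isClosed_le (by fun_prop) continuous_const
    have hcl2 := isClosedMap_snd_of_compactSpace _ hcl
    intro v
    by_contra hv
    have hvn : v ∈ (Prod.snd '' {a : Icc 0 T × X | dist (g a) z ≤ 2 * (δ / 3)})ᶜ := by
      rintro ⟨⟨s, v'⟩, hsv, rfl⟩
      exact hv ⟨s, s.2, hsv⟩
    obtain ⟨t, htN, ht⟩ := hvis _ hcl2.isOpen_compl ⟨v, hvn⟩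
    obtain ⟨r, hr0, hrT, hr⟩ := hrec t (hN.trans htN) 0 le_rfl
    rw [hf.2.1] at hr
    apply ht
    refine ⟨(⟨r - t, by linarith, by linarith⟩, f t w'), ?_, rfl⟩
    change dist (f (r - t) (f t w')) z ≤ _
    rw [hf.2.2 _ _ (by linarith) (hN.trans htN), sub_add_cancel]
    have h1 := hwz r (by linarith)
    have h2 := dist_triangle (f r w') (f r z) z
    rw [dist_comm] at hr
    linarith
  have hmem : ∀ v : X, z ∈ thickening δ (closure (posOrbit f v)) := by
    intro v
    obtain ⟨s, hs, h⟩ := hall v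
    refine mem_thickening_iff.2 ⟨f s v, subset_closure ⟨s, hs.1, rfl⟩, ?_⟩
    rw [dist_comm]; linarith
  exact Set.disjoint_left.1 hdisj (hmem p) (hmem q)

lemma meager_class {X : Type*} [MetricSpace X] [CompleteSpace X]
    {f : ℝ → X → X} (hf : IsSemiflow f) (hc : Chaotic f) (x : X) :
    IsMeagre {y : X | ¬ 0 < Filter.limsup
      (fun t : ℝ => (dist (f t x) (f t y) : EReal)) Filter.atTop} := by
  obtain ⟨ε, hε, h⟩ := sensitive hf hc
  have hm : IsMeagre (⋃ N : ℕ, {y : X | ∀ t : ℝ, (N : ℝ) ≤ t → dist (f t x) (f t y) ≤ ε / 2}) := by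
    refine isMeagre_iUnion fun N => IsNowhereDense.isMeagre ?_
    have hcl : IsClosed {y : X | ∀ t : ℝ, (N : ℝ) ≤ t → dist (f t x) (f t y) ≤ ε / 2} := by
      simp only [ofPred_forall]
      refine isClosed_iInter fun t => isClosed_iInter fun ht => ?_
      have := semiflow_cont hf ((Nat.cast_nonneg N).trans ht)
      exact isClosed_le (by fun_prop) continuous_const
    rw [hcl.isNowhereDense_iff]
    by_contra hne
    obtain ⟨y, hy, z, hz, t, ht, hlt⟩ := h _ isOpen_interior (nonempty_iff_ne_empty.2 hne) N
    have h1 := interior_subset hy t ht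
    have h2 := interior_subset hz t ht
    have h3 := dist_triangle_left (f t y) (f t z) (f t x)
    linarith
  refine hm.mono ?_
  intro y hy
  have hlt : Filter.limsup (fun t : ℝ => (dist (f t x) (f t y) : EReal)) Filter.atTop
      < ((ε / 2 : ℝ) : EReal) :=
    (not_lt.1 hy).trans_lt (by exact_mod_cast (half_pos hε))
  have hev := eventually_lt_of_limsup_lt hlt
  obtain ⟨a, ha⟩ := eventually_atTop.1 hev
  obtain ⟨N, hN⟩ := exists_nat_ge a
  refine mem_iUnion.2 ⟨N, fun t ht => ?_⟩
  have := ha t (hN.trans ht)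
  exact (EReal.coe_lt_coe_iff.1 this).le

lemma exists_scrambled {X : Type*} [MetricSpace X] [CompleteSpace X] [SeparableSpace X]
    [Nonempty X] (S : X → X → Prop) (hsymm : ∀ x y, S x y → S y x) (hirr : ∀ x, ¬ S x x)
    (hm : ∀ x, IsMeagre {y | ¬ S x y}) :
    ∃ B : Set X, Dense B ∧ ¬ B.Countable ∧ ∀ x ∈ B, ∀ y ∈ B, x ≠ y → S x y := by
  have : SecondCountableTopology X := UniformSpace.secondCountable_of_separable X
  have hG : ∀ (C : Set X), C.Countable → ∀ U : Set X, IsOpen U → U.Nonempty →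
      ∃ y ∈ U, ∀ c ∈ C, S c y := by
    intro C hC U hU hne
    have : Countable C := hC.to_subtype
    have hmm : IsMeagre (⋃ c : C, {y | ¬ S c y}) := isMeagre_iUnion fun c => hm c
    have hdense := dense_of_mem_residual hmm
    obtain ⟨y, hyU, hy⟩ := hdense.inter_open_nonempty U hU hne
    refine ⟨y, hyU, fun c hc => ?_⟩
    by_contra hn
    exact hy (mem_iUnion.2 ⟨⟨c, hc⟩, hn⟩)
  let b := countableBasis X
  have hbc : b.Countable := countable_countableBasis X
  have hbne : b.Nonempty := by
    obtain ⟨x⟩ := ‹Nonempty X›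
    obtain ⟨v, hv, -⟩ := (isBasis_countableBasis X).exists_subset_of_mem_open (mem_univ x)
      isOpen_univ
    exact ⟨v, hv⟩
  obtain ⟨u, hu⟩ := hbc.exists_eq_range hbne
  have hub : ∀ n, u n ∈ b := fun n => hu ▸ mem_range_self n
  have hG' : ∀ (n : ℕ) (ih : ∀ m < n, X), ∃ y ∈ u n, ∀ m (h : m < n), S (ih m h) y := by
    intro n ih
    obtain ⟨y, hy, h⟩ := hG (range fun m : Iio n => ih m m.2) (countable_range _) (u n)
      (isOpen_of_mem_countableBasis (hub n)) (nonempty_of_mem_countableBasis (hub n))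
    exact ⟨y, hy, fun m hmn => h _ ⟨⟨m, hmn⟩, rfl⟩⟩
  choose G hGu hGS using hG'
  let g : ℕ → X := (Nat.lt_wfRel.wf).fix G
  have hg : ∀ n, g n = G n (fun m _ => g m) := fun n => WellFounded.fix_eq _ _ _
  have hgu : ∀ n, g n ∈ u n := fun n => by rw [hg]; exact hGu _ _
  have hgS : ∀ m n, m < n → S (g m) (g n) := fun m n hmn => by
    rw [hg n]; exact hGS n (fun m _ => g m) m hmn
  have hrange : range g ∈ {B : Set X | ∀ x ∈ B, ∀ y ∈ B, x ≠ y → S x y} := by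
    rintro _ ⟨m, rfl⟩ _ ⟨n, rfl⟩ hne
    rcases lt_trichotomy m n with h | h | h
    · exact hgS _ _ h
    · exact absurd (by rw [h]) hne
    · exact hsymm _ _ (hgS _ _ h)
  obtain ⟨B, hgB, hB⟩ := zorn_subset_nonempty {B : Set X | ∀ x ∈ B, ∀ y ∈ B, x ≠ y → S x y}
    (by
      intro c hc hchain _
      refine ⟨⋃₀ c, ?_, fun s hs => subset_sUnion_of_mem hs⟩
      rintro x ⟨s, hs, hx⟩ y ⟨t, ht, hy⟩ hne
      rcases hchain.total hs ht with h | h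
      · exact hc ht x (h hx) y hy hne
      · exact hc hs x hx y (h hy) hne) (range g) hrange
  refine ⟨B, ?_, ?_, hB.prop⟩
  · rw [(isBasis_countableBasis X).dense_iff]
    intro o ho _
    have ho' : o ∈ range u := hu ▸ ho
    obtain ⟨n, rfl⟩ := ho'
    exact ⟨g n, hgu n, hgB (mem_range_self n)⟩
  · intro hcount
    obtain ⟨y, -, hy⟩ := hG B hcount univ isOpen_univ univ_nonempty
    have hyB : y ∉ B := fun h => hirr y (hy y h)
    apply hyB
    refine hB.le_of_ge (y := insert y B) ?_ (subset_insert _ _) (mem_insert _ _)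
    rintro a (rfl | ha) c (rfl | hc') hne
    · exact absurd rfl hne
    · exact hsymm _ _ (hy c hc')
    · exact hy a ha
    · exact hB.prop a ha c hc' hne

/-- If `(X,f)` is chaotic then there is an uncountable dense
`u`-scrambled set. -/
theorem chaotic_uncountable_scrambled {X : Type*} [MetricSpace X] [CompleteSpace X]
    [SeparableSpace X] (f : ℝ → X → X) (hf : IsSemiflow f) (hc : Chaotic f) :
    ∃ B : Set X, Dense B ∧ ¬ B.Countable ∧
      ∀ x ∈ B, ∀ y ∈ B, x ≠ y →
        0 < Filter.limsup (fun t : ℝ => (dist (f t x) (f t y) : EReal)) Filter.atTop := by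
  have : Nonempty X := ⟨hc.1.choose⟩
  have : SecondCountableTopology X := UniformSpace.secondCountable_of_separable X
  refine exists_scrambled (fun x y => 0 < Filter.limsup
    (fun t : ℝ => (dist (f t x) (f t y) : EReal)) Filter.atTop) ?_ ?_ ?_
  · intro x y h
    simpa only [dist_comm] using h
  · intro x
    simp
  · exact meager_class hf hc
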